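/- Let f, g ∈ A(S) be weakly equivalent p.m.p. actions of F_S, let r > 0 be an integer, δ > 0, and let X = L_1 ∪ ⋯ ∪ L_n ∪ E be a finite Borel partition such that μ(E) < δ, the relation ~^f_x (defined on W^{r,S} by w_1 ~^f_x w_2 iff f_{w_1}(x) = f_{w_2}(x)) is the same equivalence relation P_i for all x ∈ L_i, and f_{w_1}(L_i) ∩ f_{w_2}(L_i) = ∅ whenever w_1, w_2 ∈ W^{r,S} are not P_i-equivalent. Fix an equivalence relation κ on W^{r,S} and let T(κ, f) = {x ∈ X : ~^f_x = κ} and T(κ, g) = {x ∈ X : ~^g_x = κ}. For ρ > 0, call a finite Borel partition X = L^ρ_1 ∪ ⋯ ∪ L^ρ_n ∪ E^ρ a ρ-simulation if |μ(L_i) − μ(L^ρ_i)| < ρ for all i and |μ(f_{w_1}(L_i) ∩ f_{w_2}(L_j)) − μ(g_{w_1}(L^ρ_i) ∩ g_{w_2}(L^ρ_j))| < ρ for all 1 ≤ i, j ≤ n and all w_1, w_2 ∈ W^{r,S}. Then for every ε > 0 there exists ρ_0 > 0 such that for every 0 < ρ < ρ_0 and every ρ-simulation, μ( (⋃_{i :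 L_i ⊆ T(κ,f)} L^ρ_i) \ T(κ, g) ) ≤ 3δ + ε. -/

import Mathlib

open MeasureTheory

/-- A probability-measure-preserving action of a group `G` on a measure space. -/
structure PMP (G : Type*) [Group G] (X : Type*) [MeasurableSpace X] (μ : Measure X) where
  act : G → X → X
  measurable : ∀ γ, Measurable (act γ)
  preserves : ∀ γ, MeasurePreserving (act γ) μ μ
  act_one : ∀ x, act 1 x = x
  act_mul : ∀ γ₁ γ₂ x, act (γ₁ * γ₂) x = act γ₁ (act γ₂ x)

/-- `f` weakly contains `g`. -/
def WeaklyContains {G : Type*} [Group G] {X Y : Type*} [MeasurableSpace X] [MeasurableSpace Y]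
    {μ : Measure X} {ν : Measure Y} (f : PMP G X μ) (g : PMP G Y ν) : Prop :=
  ∀ n : ℕ, 1 ≤ n → ∀ C : Y → Fin n, Measurable C →
    ∀ F : Finset G, ∀ ε : ℝ, 0 < ε →
      ∃ D : X → Fin n, Measurable D ∧
        ∀ i j : Fin n, ∀ γ ∈ F,
          |(μ (f.act γ '' (D ⁻¹' {i}) ∩ D ⁻¹' {j})).toReal -
            (ν (g.act γ '' (C ⁻¹' {i}) ∩ C ⁻¹' {j})).toReal| ≤ ε

/-- Weak equivalence of p.m.p. actions. -/
def WeaklyEquivalent {G : Type*} [Group G] {X Y : Type*} [MeasurableSpace X] [MeasurableSpace Y]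
    {μ : Measure X} {ν : Measure Y} (f : PMP G X μ) (g : PMP G Y ν) : Prop :=
  WeaklyContains f g ∧ WeaklyContains g f

/-- The set `W^{r,S}` of reduced words of length at most `r` in the free group on `S`. -/
def Wball (S : Type) [DecidableEq S] (r : ℕ) : Set (FreeGroup S) := {w | FreeGroup.norm w ≤ r}

/-- The set of points of `X` whose `r`-type with respect to the action `f` is the
equivalence relation `κ` on `W^{r,S}`. -/
def typeSet {S X : Type} [DecidableEq S] [MeasurableSpace X] {μ : Measure X}
    (f : PMP (FreeGroup S) X μ) (r : ℕ) (κ : Wball S r → Wball S r → Prop) : Set X :=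
  {x | ∀ w₁ w₂ : Wball S r, f.act ↑w₁ x = f.act ↑w₂ x ↔ κ w₁ w₂}

/-!
Weak containment bounds fixed-point sets: if `f` weakly contains `g`, then the set of points fixed
under `f` by finitely many group elements is at most as large as the one for `g`. For a relation
`κ` on words, let `V_f` and `V_g` be the sets where all coincidences demanded by `κ` hold. These
are common fixed-point sets, so `μ V_f ≤ μ V_g`.

Let `R` be the union of the pieces `L i` not contained in `V_f`, and `R'` the union of the
corresponding `L' i`. As `V_f`, `R` and `E` cover the space and `μ R ≈ μ R'`, the sum
`μ V_g + μ R'` is at least about `1 - μ E`. Moreover `V_g` and `R'` are almost disjoint, because a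
point of both has a coincidence under `g` which `f` rules out on the matching piece, and such
spurious coincidences have small measure. Hence the complement of `V_g ∪ R'` has measure at most
about `μ E`, and it contains every point of the set to be bounded that has no spurious coincidence.
-/

instance finite_Wball (S : Type) [Finite S] [DecidableEq S] (r : ℕ) : Finite (Wball S r) :=
  ((List.finite_length_le (S × Bool) r).preimage FreeGroup.toWord_injective.injOn).to_subtype

theorem measurableEq_of_countablySeparated (Y : Type*) [MeasurableSpace Y]
    [MeasurableSpace.CountablySeparated Y] : MeasurableEq Y := by
  obtain ⟨φ, hφ, hφ_inj⟩ :=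
    MeasurableSpace.measurable_injection_nat_bool_of_countablySeparated Y
  refine ⟨?_⟩
  convert! measurableSet_eq_fun (hφ.comp measurable_fst) (hφ.comp measurable_snd)
  ext ⟨y, z⟩
  simp [hφ_inj.eq_iff]

namespace PMP

variable {G X ι : Type*} [Group G] [MeasurableSpace X] {μ : Measure X} (f : PMP G X μ)

/-- The set of points fixed by every element of `F`. -/
def fixedSet (F : Set G) : Set X := {x | ∀ γ ∈ F, f.act γ x = x}

/-- The set of points at which the translates by a family `w` of group elements coincide for all
pairs of indices in the relation `κ`, with further coincidences allowed. -/
def coincidenceSet (w : ι → G) (κ : ι → ι → Prop) : Set X :=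
  {x | ∀ a b, κ a b → f.act (w a) x = f.act (w b) x}

/-- The set of points at which the translates by a family `w` of group elements coincide exactly
for the pairs of indices in the relation `κ`. When `w` enumerates `Wball S r` this is `typeSet`. -/
def exactCoincidenceSet (w : ι → G) (κ : ι → ι → Prop) : Set X :=
  {x | ∀ a b, f.act (w a) x = f.act (w b) x ↔ κ a b}

theorem image_act_one (A : Set X) : f.act 1 '' A = A := by
  simp [funext f.act_one]

theorem image_act_eq_preimage (γ : G) (A : Set X) : f.act γ '' A = f.act γ⁻¹ ⁻¹' A :=
  congrFun (Set.image_eq_preimage_of_inverse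
    (fun x => by rw [← f.act_mul, inv_mul_cancel, f.act_one])
    fun x => by rw [← f.act_mul, mul_inv_cancel, f.act_one]) A

theorem measurableSet_image_act (γ : G) {A : Set X} (hA : MeasurableSet A) :
    MeasurableSet (f.act γ '' A) :=
  f.image_act_eq_preimage γ A ▸ f.measurable γ⁻¹ hA

theorem act_inv_mul_eq_self_iff (γ₁ γ₂ : G) (x : X) :
    f.act (γ₂⁻¹ * γ₁) x = x ↔ f.act γ₁ x = f.act γ₂ x := by
  refine ⟨fun h => ?_, fun h => ?_⟩
  · rw [← mul_inv_cancel_left γ₂ γ₁, f.act_mul, h]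
  · rw [f.act_mul, h, ← f.act_mul, inv_mul_cancel, f.act_one]

theorem coincidenceSet_eq_fixedSet (w : ι → G) (κ : ι → ι → Prop) :
    f.coincidenceSet w κ =
      f.fixedSet ((fun p : ι × ι => (w p.2)⁻¹ * w p.1) '' {p | κ p.1 p.2}) := by
  ext x
  simp only [coincidenceSet, fixedSet, Set.forall_mem_image, Prod.forall, Set.mem_ofPred_eq,
    act_inv_mul_eq_self_iff]

theorem measurableSet_coincidenceSet [MeasurableEq X] [Countable ι] (w : ι → G)
    (κ : ι → ι → Prop) : MeasurableSet (f.coincidenceSet w κ) := by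
  simp only [coincidenceSet, Set.ofPred_forall]
  exact .iInter fun a => .iInter fun b => .iInter fun _ =>
    measurableSet_eq_fun (f.measurable (w a)) (f.measurable (w b))

theorem exactCoincidenceSet_subset_coincidenceSet (w : ι → G) (κ : ι → ι → Prop) :
    f.exactCoincidenceSet w κ ⊆ f.coincidenceSet w κ :=
  fun _ hx a b hab => (hx a b).2 hab

theorem measureReal_sep_act_eq_le [IsFiniteMeasure μ] (γ₁ γ₂ : G) {A : Set X}
    (hA : MeasurableSet A) :
    μ.real {x ∈ A | f.act γ₁ x = f.act γ₂ x} ≤ μ.real (f.act γ₁ '' A ∩ f.act γ₂ '' A) := by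
  have hmeas := (f.measurableSet_image_act γ₁ hA).inter (f.measurableSet_image_act γ₂ hA)
  rw [← (f.preserves γ₁).measureReal_preimage hmeas.nullMeasurableSet]
  exact measureReal_mono fun x ⟨hx, heq⟩ => ⟨⟨x, hx, rfl⟩, ⟨x, hx, heq.symm⟩⟩

end PMP

namespace WeaklyContains

variable {G X Y : Type*} [Group G] [MeasurableSpace X] [MeasurableSpace Y]
  {μ : Measure X} {ν : Measure Y} {f : PMP G X μ} {g : PMP G Y ν}

theorem exists_measurable_coloring {β : Type*} [Finite β] [Nonempty β] [MeasurableSpace β]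
    [DiscreteMeasurableSpace β] (h : WeaklyContains f g) {C : Y → β} (hC : Measurable C)
    (F : Finset G) {ε : ℝ} (hε : 0 < ε) :
    ∃ D : X → β, Measurable D ∧ ∀ u v : β, ∀ γ ∈ F,
      |μ.real (f.act γ '' (D ⁻¹' {u}) ∩ D ⁻¹' {v}) -
        ν.real (g.act γ '' (C ⁻¹' {u}) ∩ C ⁻¹' {v})| ≤ ε := by
  let e := Finite.equivFin β
  obtain ⟨D, hD, hDC⟩ := h (Nat.card β) Nat.card_pos (e ∘ C)
    ((measurable_of_countable e).comp hC) F ε hε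
  refine ⟨e.symm ∘ D, (measurable_of_countable e.symm).comp hD, fun u v γ hγ => ?_⟩
  have fiber_D (u : β) : (e.symm ∘ D) ⁻¹' {u} = D ⁻¹' {e u} := by
    ext x
    simp [Equiv.symm_apply_eq]
  have fiber_C (u : β) : C ⁻¹' {u} = (e ∘ C) ⁻¹' {e u} := by
    ext y
    simp
  rw [fiber_D, fiber_D, fiber_C, fiber_C]
  exact hDC (e u) (e v) γ hγ

theorem measureReal_fixedSet_le_of_coloring [IsFiniteMeasure μ] [IsFiniteMeasure ν]
    {β : Type*} [Finite β] [Nonempty β] [MeasurableSpace β] [DiscreteMeasurableSpace β]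
    (h : WeaklyContains f g) {F : Set G} (hF : F.Finite) {C : Y → β} (hC : Measurable C) :
    μ.real (f.fixedSet F) ≤
      ν.real {y | ∀ γ ∈ F, ∃ z, C z = C y ∧ C (g.act γ z) = C y} := by
  classical
  have := Fintype.ofFinite β
  lift F to Finset G using hF
  have hcard : (0 : ℝ) < Fintype.card β := by exact_mod_cast Fintype.card_pos
  refine le_of_forall_pos_le_add fun ε hε => ?_
  obtain ⟨D, -, hDC⟩ := h.exists_measurable_coloring hC (insert 1 F) (div_pos hε hcard)
  let R : Finset β := {v | ∀ γ ∈ F, ∃ z, C z = v ∧ C (g.act γ z) = v}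
  -- A point fixed by `γ` keeps its colour under `γ`, so it can only carry, up to small measure,
  -- a colour `v` whose class in `Y` meets its own translate by `γ`.
  have fiber_le (v : β) : μ.real (f.fixedSet F ∩ D ⁻¹' {v}) ≤
      (if v ∈ R then ν.real (C ⁻¹' {v}) else 0) + ε / Fintype.card β := by
    split_ifs with hv
    · have hDv := hDC v v 1 (F.mem_insert_self 1)
      simp only [PMP.image_act_one, Set.inter_self] at hDv
      have : μ.real (f.fixedSet F ∩ D ⁻¹' {v}) ≤ μ.real (D ⁻¹' {v}) :=
        measureReal_mono Set.inter_subset_right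
      linarith [(abs_le.1 hDv).2]
    · obtain ⟨γ, hγ, hγv⟩ : ∃ γ ∈ F, ∀ z, C z = v → C (g.act γ z) ≠ v := by simpa [R] using hv
      have hempty : g.act γ '' (C ⁻¹' {v}) ∩ C ⁻¹' {v} = ∅ := by
        simpa [Set.eq_empty_iff_forall_notMem] using hγv
      have hDv := hDC v v γ (Finset.mem_insert_of_mem hγ)
      rw [hempty, measureReal_empty, sub_zero] at hDv
      have : μ.real (f.fixedSet F ∩ D ⁻¹' {v}) ≤ μ.real (f.act γ '' (D ⁻¹' {v}) ∩ D ⁻¹' {v}) :=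
        measureReal_mono fun x ⟨hx, hxv⟩ => ⟨⟨x, hxv, hx γ hγ⟩, hxv⟩
      linarith [(abs_le.1 hDv).2]
  calc μ.real (f.fixedSet F)
      = μ.real (⋃ v, f.fixedSet F ∩ D ⁻¹' {v}) := by
        rw [← Set.inter_iUnion, ← Set.preimage_iUnion, Set.iUnion_of_singleton,
          Set.preimage_univ, Set.inter_univ]
    _ ≤ ∑ v, μ.real (f.fixedSet F ∩ D ⁻¹' {v}) := measureReal_iUnion_fintype_le _
    _ ≤ ∑ v, ((if v ∈ R then ν.real (C ⁻¹' {v}) else 0) + ε / Fintype.card β) :=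
        Finset.sum_le_sum fun v _ => fiber_le v
    _ = ν.real (C ⁻¹' R) + ε := by
        rw [Finset.sum_add_distrib, Finset.sum_ite_mem, Finset.univ_inter,
          sum_measureReal_preimage_singleton R fun v _ => hC (measurableSet_singleton v)]
        simp [mul_div_cancel₀ _ hcard.ne']
    _ = ν.real {y | ∀ γ ∈ F, ∃ z, C z = C y ∧ C (g.act γ z) = C y} + ε := by
        simp [R, Set.preimage]

theorem measureReal_fixedSet_le_of_measurable [IsFiniteMeasure μ] [IsFiniteMeasure ν]
    {α : Type*} [Finite α] [Nonempty α] [MeasurableSpace α] [DiscreteMeasurableSpace α]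
    (h : WeaklyContains f g) {F : Set G} (hF : F.Finite) {c : Y → α} (hc : Measurable c) :
    μ.real (f.fixedSet F) ≤ ν.real {y | ∀ γ ∈ F, c (g.act γ y) = c y} := by
  have := hF.to_subtype
  let C : Y → α × (F → α) := fun y => (c y, fun γ => c (g.act γ y))
  have hC : Measurable C :=
    hc.prodMk (measurable_pi_lambda _ fun γ => hc.comp (g.measurable γ))
  refine (h.measureReal_fixedSet_le_of_coloring hF hC).trans (measureReal_mono fun y hy γ hγ => ?_)
  obtain ⟨z, hz, hγz⟩ := hy γ hγ
  calc c (g.act γ y) = c (g.act γ z) := (congrFun (congrArg Prod.snd hz) ⟨γ, hγ⟩).symm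
    _ = c y := congrArg Prod.fst hγz

theorem measureReal_fixedSet_le [IsFiniteMeasure μ] [IsFiniteMeasure ν]
    [MeasurableSpace.CountablySeparated Y] (h : WeaklyContains f g) {F : Set G} (hF : F.Finite) :
    μ.real (f.fixedSet F) ≤ ν.real (g.fixedSet F) := by
  obtain ⟨φ, hφ, hφ_inj⟩ :=
    MeasurableSpace.measurable_injection_nat_bool_of_countablySeparated Y
  let c (N : ℕ) (y : Y) : Fin N → Bool := fun k => φ y k
  have hc (N : ℕ) : Measurable (c N) :=
    measurable_pi_lambda _ fun k => (measurable_pi_apply (k : ℕ)).comp hφ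
  let T (N : ℕ) : Set Y := {y | ∀ γ ∈ F, c N (g.act γ y) = c N y}
  have hT_meas (N : ℕ) : MeasurableSet (T N) := by
    simp only [T, Set.ofPred_forall]
    exact hF.measurableSet_biInter fun γ _ =>
      measurableSet_eq_fun ((hc N).comp (g.measurable γ)) (hc N)
  have hT_anti : Antitone T := fun M N hMN y hy γ hγ =>
    funext fun k => congrFun (hy γ hγ) (k.castLE hMN)
  have hT_iInter : ⋂ N, T N = g.fixedSet F := by
    refine Set.Subset.antisymm (fun y hy γ hγ => hφ_inj <| funext fun k => ?_) fun y hy => ?_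
    · exact congrFun (Set.mem_iInter.1 hy (k + 1) γ hγ) (Fin.last k)
    · exact Set.mem_iInter.2 fun N γ hγ => congrArg (c N) (hy γ hγ)
  have hlim : Filter.Tendsto (fun N => ν.real (T N)) Filter.atTop (nhds (ν.real (g.fixedSet F))) :=
    hT_iInter ▸ (ENNReal.tendsto_toReal (measure_ne_top _ _)).comp
      (tendsto_measure_iInter_atTop (fun N => (hT_meas N).nullMeasurableSet) hT_anti
        ⟨0, measure_ne_top _ _⟩)
  exact ge_of_tendsto' hlim fun N => h.measureReal_fixedSet_le_of_measurable hF (hc N)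

theorem measureReal_coincidenceSet_le [IsFiniteMeasure μ] [IsFiniteMeasure ν]
    [MeasurableSpace.CountablySeparated Y] {ι : Type*} [Finite ι] (h : WeaklyContains f g)
    (w : ι → G) (κ : ι → ι → Prop) :
    μ.real (f.coincidenceSet w κ) ≤ ν.real (g.coincidenceSet w κ) := by
  rw [f.coincidenceSet_eq_fixedSet, g.coincidenceSet_eq_fixedSet]
  exact h.measureReal_fixedSet_le (Set.toFinite _)

end WeaklyContains

section Simulation

open scoped Function

variable {G X Y ι σ : Type*} [Group G] [MeasurableSpace X] [MeasurableSpace Y]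
  {μ : Measure X} {ν : Measure Y} {f : PMP G X μ} {g : PMP G Y ν}
  {w : ι → G} {κ : ι → ι → Prop} {L : σ → Set X} {E : Set X} {L' : σ → Set Y} {ρ : ℝ}

theorem measureReal_biUnion_le_biUnion_add [IsFiniteMeasure ν] [Fintype σ]
    (hL' : ∀ i, MeasurableSet (L' i)) (hdisj : Pairwise (Disjoint on L'))
    (hρ : ∀ i, |μ.real (L i) - ν.real (L' i)| ≤ ρ) (s : Set σ) :
    μ.real (⋃ i ∈ s, L i) ≤ ν.real (⋃ i ∈ s, L' i) + Fintype.card σ * ρ := by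
  classical
  lift s to Finset σ using s.toFinite
  simp only [Finset.mem_coe]
  calc μ.real (⋃ i ∈ s, L i)
      ≤ ∑ i ∈ s, μ.real (L i) := measureReal_biUnion_finset_le s L
    _ ≤ ∑ i ∈ s, ν.real (L' i) + ∑ i ∈ s, |μ.real (L i) - ν.real (L' i)| := by
        rw [← Finset.sum_add_distrib]
        gcongr with i
        linarith [le_abs_self (μ.real (L i) - ν.real (L' i))]
    _ ≤ ∑ i ∈ s, ν.real (L' i) + ∑ i, |μ.real (L i) - ν.real (L' i)| := by
        gcongr
        exact s.subset_univ
    _ ≤ ν.real (⋃ i ∈ s, L' i) + Fintype.card σ * ρ := by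
        rw [measureReal_biUnion_finset (fun i _ j _ hij => hdisj hij) fun i _ => hL' i]
        gcongr
        simpa using Finset.sum_le_card_nsmul Finset.univ _ ρ fun i _ => hρ i

/-- The set of points of a piece `L' i` at which two translates under `g` coincide although the
corresponding translates of `L i` under `f` are disjoint. It is the part of the space where the
simulation `L'` of `L` misrepresents `f`. -/
def spuriousSet (f : PMP G X μ) (g : PMP G Y ν) (w : ι → G) (L : σ → Set X) (L' : σ → Set Y) :
    Set Y :=
  ⋃ (i : σ) (p : ι × ι), {y | Disjoint (f.act (w p.1) '' L i) (f.act (w p.2) '' L i) ∧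
    y ∈ L' i ∧ g.act (w p.1) y = g.act (w p.2) y}

theorem mem_spuriousSet {i : σ} {a b : ι} {y : Y}
    (hdisj : Disjoint (f.act (w a) '' L i) (f.act (w b) '' L i)) (hy : y ∈ L' i)
    (hab : g.act (w a) y = g.act (w b) y) : y ∈ spuriousSet f g w L L' :=
  Set.mem_iUnion₂.2 ⟨i, (a, b), hdisj, hy, hab⟩

theorem measureReal_spuriousSet_le [IsFiniteMeasure ν] [Fintype ι] [Fintype σ]
    (hL' : ∀ i, MeasurableSet (L' i)) (hρ : 0 ≤ ρ)
    (hsim : ∀ i a b, |μ.real (f.act (w a) '' L i ∩ f.act (w b) '' L i) -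
      ν.real (g.act (w a) '' L' i ∩ g.act (w b) '' L' i)| ≤ ρ) :
    ν.real (spuriousSet f g w L L') ≤ Fintype.card σ * Fintype.card ι ^ 2 * ρ := by
  have piece_le (i : σ) (p : ι × ι) :
      ν.real {y | Disjoint (f.act (w p.1) '' L i) (f.act (w p.2) '' L i) ∧
        y ∈ L' i ∧ g.act (w p.1) y = g.act (w p.2) y} ≤ ρ := by
    by_cases hdisj : Disjoint (f.act (w p.1) '' L i) (f.act (w p.2) '' L i)
    · have hp := hsim i p.1 p.2
      rw [hdisj.inter_eq, measureReal_empty, zero_sub, abs_neg] at hp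
      simp only [hdisj, true_and]
      exact (g.measureReal_sep_act_eq_le _ _ (hL' i)).trans ((le_abs_self _).trans hp)
    · simpa [hdisj] using hρ
  calc ν.real (spuriousSet f g w L L')
      ≤ ∑ _i : σ, ∑ _p : ι × ι, ρ :=
        (measureReal_iUnion_fintype_le _).trans <| Finset.sum_le_sum fun i _ =>
          (measureReal_iUnion_fintype_le _).trans <| Finset.sum_le_sum fun p _ => piece_le i p
    _ = Fintype.card σ * Fintype.card ι ^ 2 * ρ := by
        simp only [Finset.sum_const, Finset.card_univ, Fintype.card_prod, nsmul_eq_mul]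
        push_cast
        ring

theorem coincidenceSet_inter_biUnion_subset_spuriousSet
    (hdich : ∀ i a b, Set.EqOn (f.act (w a)) (f.act (w b)) (L i) ∨
      Disjoint (f.act (w a) '' L i) (f.act (w b) '' L i)) :
    g.coincidenceSet w κ ∩ ⋃ i ∈ {i | ¬ L i ⊆ f.coincidenceSet w κ}, L' i ⊆
      spuriousSet f g w L L' := by
  rintro y ⟨hyκ, hy⟩
  obtain ⟨i, hi, hyi⟩ := Set.mem_iUnion₂.1 hy
  obtain ⟨x, hx, a, b, hab, hne⟩ :
      ∃ x ∈ L i, ∃ a b, κ a b ∧ f.act (w a) x ≠ f.act (w b) x := by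
    simpa [Set.not_subset, PMP.coincidenceSet] using hi
  have hdisj := (hdich i a b).resolve_left fun heq => hne (heq hx)
  exact mem_spuriousSet hdisj hyi (hyκ a b hab)

theorem biUnion_diff_exactCoincidenceSet_subset
    (hdich : ∀ i a b, Set.EqOn (f.act (w a)) (f.act (w b)) (L i) ∨
      Disjoint (f.act (w a) '' L i) (f.act (w b) '' L i)) (hL' : Pairwise (Disjoint on L')) :
    (⋃ i ∈ {i | L i ⊆ f.exactCoincidenceSet w κ}, L' i) \ g.exactCoincidenceSet w κ ⊆
      (g.coincidenceSet w κ ∪ ⋃ i ∈ {i | ¬ L i ⊆ f.coincidenceSet w κ}, L' i)ᶜ ∪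
        spuriousSet f g w L L' := by
  rintro y ⟨hy, hyκ⟩
  obtain ⟨i, hi, hyi⟩ := Set.mem_iUnion₂.1 hy
  by_cases hyV : y ∈ g.coincidenceSet w κ
  · right
    obtain ⟨a, b, hgab, hab⟩ : ∃ a b, g.act (w a) y = g.act (w b) y ∧ ¬ κ a b := by
      by_contra! hκ
      exact hyκ fun a b => ⟨hκ a b, hyV a b⟩
    have hdisj : Disjoint (f.act (w a) '' L i) (f.act (w b) '' L i) := by
      refine (hdich i a b).elim (fun heq => ?_) id
      have hempty : L i = ∅ :=
        Set.eq_empty_of_forall_notMem fun x hx => hab ((hi hx a b).1 (heq hx))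
      simp [hempty]
    exact mem_spuriousSet hdisj hyi hgab
  · left
    rintro (hyV' | hyR)
    · exact hyV hyV'
    · obtain ⟨j, hj, hyj⟩ := Set.mem_iUnion₂.1 hyR
      obtain rfl : i = j := by_contra fun hij => (hL' hij).le_bot ⟨hyi, hyj⟩
      exact hj (hi.trans (f.exactCoincidenceSet_subset_coincidenceSet w κ))

theorem one_le_measureReal_coincidenceSet_add [IsProbabilityMeasure μ] (w : ι → G)
    (κ : ι → ι → Prop) (hcover : (⋃ i, L i) ∪ E = Set.univ) :
    1 ≤ μ.real (f.coincidenceSet w κ) +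
      μ.real (⋃ i ∈ {i | ¬ L i ⊆ f.coincidenceSet w κ}, L i) + μ.real E := by
  set V := f.coincidenceSet w κ
  set R := ⋃ i ∈ {i | ¬ L i ⊆ V}, L i
  have hL : ⋃ i, L i ⊆ V ∪ R := Set.iUnion_subset fun i => by
    by_cases hi : L i ⊆ V
    · exact hi.trans Set.subset_union_left
    · exact (Set.subset_biUnion_of_mem hi).trans Set.subset_union_right
  calc 1 = μ.real ((⋃ i, L i) ∪ E) := by rw [hcover, probReal_univ]
    _ ≤ μ.real (V ∪ R ∪ E) := measureReal_mono (Set.union_subset_union_left E hL)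
    _ ≤ μ.real (V ∪ R) + μ.real E := measureReal_union_le _ _
    _ ≤ μ.real V + μ.real R + μ.real E := by gcongr; exact measureReal_union_le _ _

theorem measureReal_biUnion_diff_exactCoincidenceSet_le [IsProbabilityMeasure μ]
    [IsProbabilityMeasure ν] [MeasurableSpace.CountablySeparated Y] [Fintype ι] [Fintype σ]
    (h : WeaklyContains f g) (hcover : (⋃ i, L i) ∪ E = Set.univ)
    (hdich : ∀ i a b, Set.EqOn (f.act (w a)) (f.act (w b)) (L i) ∨
      Disjoint (f.act (w a) '' L i) (f.act (w b) '' L i))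
    (κ : ι → ι → Prop) (hρ : 0 ≤ ρ) (hL' : ∀ i, MeasurableSet (L' i))
    (hdisj : Pairwise (Disjoint on L')) (hμ : ∀ i, |μ.real (L i) - ν.real (L' i)| ≤ ρ)
    (hsim : ∀ i a b, |μ.real (f.act (w a) '' L i ∩ f.act (w b) '' L i) -
      ν.real (g.act (w a) '' L' i ∩ g.act (w b) '' L' i)| ≤ ρ) :
    ν.real ((⋃ i ∈ {i | L i ⊆ f.exactCoincidenceSet w κ}, L' i) \ g.exactCoincidenceSet w κ) ≤
      μ.real E + Fintype.card σ * (1 + 2 * Fintype.card ι ^ 2) * ρ := by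
  have := measurableEq_of_countablySeparated Y
  set bad := (⋃ i ∈ {i | L i ⊆ f.exactCoincidenceSet w κ}, L' i) \ g.exactCoincidenceSet w κ
  set N := spuriousSet f g w L L'
  set V := g.coincidenceSet w κ
  set R := ⋃ i ∈ {i | ¬ L i ⊆ f.coincidenceSet w κ}, L i
  set R' := ⋃ i ∈ {i | ¬ L i ⊆ f.coincidenceSet w κ}, L' i
  have hR'_meas : MeasurableSet R' := .biUnion (Set.to_countable _) fun i _ => hL' i
  have hVR'_meas : MeasurableSet (V ∪ R') := (g.measurableSet_coincidenceSet w κ).union hR'_meas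
  have bad_le : ν.real bad ≤ 1 - ν.real (V ∪ R') + ν.real N := by
    rw [← probReal_compl_eq_one_sub hVR'_meas]
    exact (measureReal_mono (biUnion_diff_exactCoincidenceSet_subset hdich hdisj)).trans
      (measureReal_union_le _ _)
  have union_add_inter : ν.real (V ∪ R') + ν.real (V ∩ R') = ν.real V + ν.real R' :=
    measureReal_union_add_inter hR'_meas (measure_ne_top ν V) (measure_ne_top ν R')
  have inter_le : ν.real (V ∩ R') ≤ ν.real N :=
    measureReal_mono (coincidenceSet_inter_biUnion_subset_spuriousSet hdich)
  have coincidence_le : μ.real (f.coincidenceSet w κ) ≤ ν.real V :=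
    h.measureReal_coincidenceSet_le w κ
  have R_le : μ.real R ≤ ν.real R' + Fintype.card σ * ρ :=
    measureReal_biUnion_le_biUnion_add hL' hdisj hμ _
  have cover_le : 1 ≤ μ.real (f.coincidenceSet w κ) + μ.real R + μ.real E :=
    one_le_measureReal_coincidenceSet_add w κ hcover
  have N_le : ν.real N ≤ Fintype.card σ * Fintype.card ι ^ 2 * ρ :=
    measureReal_spuriousSet_le hL' hρ hsim
  linarith

theorem simulation_measure_bound_general [IsProbabilityMeasure μ] [IsProbabilityMeasure ν]
    [MeasurableSpace.CountablySeparated Y] [Finite ι] [Finite σ] (h : WeaklyContains f g)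
    (hcover : (⋃ i, L i) ∪ E = Set.univ)
    (hdich : ∀ i a b, Set.EqOn (f.act (w a)) (f.act (w b)) (L i) ∨
      Disjoint (f.act (w a) '' L i) (f.act (w b) '' L i))
    (κ : ι → ι → Prop) {ε : ℝ} (hε : 0 < ε) :
    ∃ ρ₀ : ℝ, 0 < ρ₀ ∧ ∀ ρ : ℝ, 0 < ρ → ρ < ρ₀ → ∀ L' : σ → Set Y,
      (∀ i, MeasurableSet (L' i)) → Pairwise (Disjoint on L') →
      (∀ i, |μ.real (L i) - ν.real (L' i)| < ρ) →
      (∀ i a b, |μ.real (f.act (w a) '' L i ∩ f.act (w b) '' L i) -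
        ν.real (g.act (w a) '' L' i ∩ g.act (w b) '' L' i)| < ρ) →
      ν.real ((⋃ i ∈ {i | L i ⊆ f.exactCoincidenceSet w κ}, L' i) \
        g.exactCoincidenceSet w κ) ≤ μ.real E + ε := by
  have := Fintype.ofFinite ι
  have := Fintype.ofFinite σ
  obtain ⟨ρ₀, hρ₀, hKρ₀⟩ :=
    exists_pos_mul_lt hε (Fintype.card σ * (1 + 2 * Fintype.card ι ^ 2) : ℝ)
  refine ⟨ρ₀, hρ₀, fun ρ hρ hρρ₀ L' hL' hdisj hμ hsim => ?_⟩
  calc _ ≤ μ.real E + Fintype.card σ * (1 + 2 * Fintype.card ι ^ 2) * ρ :=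
        measureReal_biUnion_diff_exactCoincidenceSet_le h hcover hdich κ hρ.le hL' hdisj
          (fun i => (hμ i).le) fun i a b => (hsim i a b).le
    _ ≤ μ.real E + Fintype.card σ * (1 + 2 * Fintype.card ι ^ 2) * ρ₀ := by gcongr
    _ ≤ μ.real E + ε := by gcongr

end Simulation

theorem simulation_measure_bound
    {S X : Type} [Fintype S] [DecidableEq S] [MeasurableSpace X] [StandardBorelSpace X]
    {μ : Measure X} [IsProbabilityMeasure μ]
    (f g : PMP (FreeGroup S) X μ) (hfg : WeaklyEquivalent f g)
    (r : ℕ) (hr : 0 < r) (δ : ℝ) (hδ : 0 < δ)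
    (n : ℕ) (L : Fin n → Set X) (E : Set X)
    (hLmeas : ∀ i, MeasurableSet (L i)) (hEmeas : MeasurableSet E)
    (hdisjL : ∀ i j, i ≠ j → Disjoint (L i) (L j)) (hdisjE : ∀ i, Disjoint (L i) E)
    (hcover : (⋃ i, L i) ∪ E = Set.univ)
    (hE : (μ E).toReal < δ)
    (P : Fin n → (Wball S r → Wball S r → Prop))
    (hP : ∀ i, ∀ x ∈ L i, ∀ w₁ w₂ : Wball S r,
      (f.act ↑w₁ x = f.act ↑w₂ x ↔ P i w₁ w₂))
    (hPdisj : ∀ i, ∀ w₁ w₂ : Wball S r, ¬ P i w₁ w₂ →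
      f.act ↑w₁ '' L i ∩ f.act ↑w₂ '' L i = ∅)
    (κ : Wball S r → Wball S r → Prop) (hκ : Equivalence κ) :
    ∀ ε : ℝ, 0 < ε → ∃ ρ₀ : ℝ, 0 < ρ₀ ∧
      ∀ ρ : ℝ, 0 < ρ → ρ < ρ₀ →
        ∀ (L' : Fin n → Set X) (E' : Set X),
          (∀ i, MeasurableSet (L' i)) → MeasurableSet E' →
          (∀ i j, i ≠ j → Disjoint (L' i) (L' j)) → (∀ i, Disjoint (L' i) E') →
          ((⋃ i, L' i) ∪ E' = Set.univ) →
          (∀ i, |(μ (L i)).toReal - (μ (L' i)).toReal| < ρ) →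
          (∀ i j, ∀ w₁ w₂ : Wball S r,
            |(μ (f.act ↑w₁ '' L i ∩ f.act ↑w₂ '' L j)).toReal -
              (μ (g.act ↑w₁ '' L' i ∩ g.act ↑w₂ '' L' j)).toReal| < ρ) →
          (μ ((⋃ i ∈ {i : Fin n | L i ⊆ typeSet f r κ}, L' i) \ typeSet g r κ)).toReal
            ≤ 3 * δ + ε := by
  intro ε hε
  have hdich (i) (w₁ w₂ : Wball S r) : Set.EqOn (f.act w₁) (f.act w₂) (L i) ∨
      Disjoint (f.act w₁ '' L i) (f.act w₂ '' L i) :=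
    (em (P i w₁ w₂)).imp (fun h x hx => (hP i x hx w₁ w₂).2 h)
      fun h => Set.disjoint_iff_inter_eq_empty.2 (hPdisj i w₁ w₂ h)
  obtain ⟨ρ₀, hρ₀, bound⟩ := simulation_measure_bound_general hfg.1 hcover hdich κ hε
  exact ⟨ρ₀, hρ₀, fun ρ hρ hρρ₀ L' _ hL' _ hdisj _ _ hμ hsim =>
    (bound ρ hρ hρρ₀ L' hL' hdisj hμ fun i => hsim i i).trans (by rw [measureReal_def]; linarith)⟩
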